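/- arXiv:1509.07312 — 4 statements merged into one kernel-verified Lean document; each statement's English description precedes it below -/
import Mathlib

section
/- Let Q be a quantum matrix of size m. Call a nonempty subset S ⊆ Fin m maximal rank-one if the principal submatrix Q(S) has rank 1 and S is maximal (with respect to inclusion) among nonempty subsets whose principal submatrix has rank 1. Then: (a) the point cone V_Q is the union of the coordinate subspaces L_S over all maximal rank-one subsets S; and (b) for every maximal rank-one subset S, L_S is not contained in the union of the L_T over all maximal rank-one subsets T ≠ S. (Thus the L_S for S maximal rank-one are exactly the irreducible components of the point variety.) -/
/-- A quantum matrix of size `m`: all entries nonzero, diagonal entries `1`,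
and `Q i j * Q j i = 1` for all `i, j`. -/
def IsQuantumMatrix {m : ℕ} (Q : Matrix (Fin m) (Fin m) ℂ) : Prop :=
  (∀ i j, Q i j ≠ 0) ∧ (∀ i, Q i i = 1) ∧ (∀ i j, Q i j * Q j i = 1)

/-- The point cone of a quantum matrix `Q`. -/
def pointCone {m : ℕ} (Q : Matrix (Fin m) (Fin m) ℂ) : Set (Fin m → ℂ) :=
  {u | u ≠ 0 ∧ ∀ i j k : Fin m, i < j → j < k →
    (Q i j * Q j k - Q i k) * u i * u j * u k = 0}

/-- The (punctured) coordinate subspace of `ℂ^m` supported on `S`. -/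
def coordSubspace {m : ℕ} (S : Set (Fin m)) : Set (Fin m → ℂ) :=
  {u | u ≠ 0 ∧ ∀ i, i ∉ S → u i = 0}

/-- The principal submatrix of `Q` with rows and columns indexed by `S`. -/
def principalSubmatrix {m : ℕ} (Q : Matrix (Fin m) (Fin m) ℂ) (S : Finset (Fin m)) :
    Matrix {x : Fin m // x ∈ S} {x : Fin m // x ∈ S} ℂ :=
  Q.submatrix (fun i => i.1) (fun j => j.1)

/-- `S` is a maximal rank-one subset for `Q`: `S` is nonempty, the principal
submatrix `Q(S)` has rank 1, and `S` is maximal with these properties. -/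
def MaxRankOne {m : ℕ} (Q : Matrix (Fin m) (Fin m) ℂ) (S : Finset (Fin m)) : Prop :=
  S.Nonempty ∧ (principalSubmatrix Q S).rank = 1 ∧
    ∀ T : Finset (Fin m), T.Nonempty → (principalSubmatrix Q T).rank = 1 → S ⊆ T → S = T

/-!
For a nonempty `S`, rank one of the principal submatrix `Q(S)` means that `Q i j * Q j k = Q i k`
for all `i, j, k ∈ S`: one direction is the vanishing of a `2 × 2` minor, the other exhibits `Q(S)`
as (column `a`) × (row `a`) for any `a ∈ S`. Since `Q i j * Q j i = 1`, this relation is invariant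
under permutations of `i, j, k`, so it need only be tested on `i < j < k`. Hence a nonzero `u`
satisfies the equations of the point cone if and only if `Q(supp u)` has rank one, that is, if and
only if `supp u` lies in some maximal rank-one `S`. A vector with support exactly `S` shows that no
component is covered by the others.
-/

section Rank

variable {m n R : Type*} [Fintype n] [CommRing R] [IsDomain R] {A : Matrix m n R}

theorem card_le_rank_of_det_submatrix_ne_zero {k : Type*} [Fintype k] [DecidableEq k]
    (r : k → m) (c : k → n) (h : (A.submatrix r c).det ≠ 0) : Fintype.card k ≤ A.rank :=
  (Matrix.rank_of_det_ne_zero h).symm.trans_le (A.rank_submatrix_le r c)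

theorem one_le_rank_of_apply_ne_zero {i : m} {j : n} (h : A i j ≠ 0) : 1 ≤ A.rank :=
  card_le_rank_of_det_submatrix_ne_zero (fun _ : Unit => i) (fun _ => j) (by simpa using h)

theorem mul_apply_eq_of_rank_le_one (h : A.rank ≤ 1) (i k : m) (j l : n) :
    A i j * A k l = A i l * A k j := by
  have minor_eq_zero : (A.submatrix ![i, k] ![j, l]).det = 0 := by
    by_contra hdet
    have two_le_rank : 2 ≤ A.rank := card_le_rank_of_det_submatrix_ne_zero _ _ hdet
    omega
  rw [Matrix.det_fin_two, sub_eq_zero] at minor_eq_zero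
  exact minor_eq_zero

end Rank

/-- The multiplicative cocycle identity for a function of two indices; for a matrix with unit
diagonal it characterizes rank one. -/
def IsMulCocycle {ι M : Type*} [Mul M] (f : ι → ι → M) : Prop :=
  ∀ i j k, f i j * f j k = f i k

theorem IsMulCocycle.comp {ι κ M : Type*} [Mul M] {f : ι → ι → M} (hf : IsMulCocycle f)
    (g : κ → ι) : IsMulCocycle fun a b => f (g a) (g b) :=
  fun a b c => hf (g a) (g b) (g c)

theorem forall_of_swap_of_forall_lt {ι : Type*} [LinearOrder ι] {P : ι → ι → ι → Prop}
    (swap_left : ∀ ⦃i j k⦄, P i j k → P j i k) (swap_right : ∀ ⦃i j k⦄, P i j k → P i k j)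
    (diag : ∀ i j, P i i j) (lt : ∀ i j k, i < j → j < k → P i j k) (i j k : ι) : P i j k := by
  have le ⦃a b c : ι⦄ (hab : a ≤ b) (hbc : b ≤ c) : P a b c := by
    rcases hab.eq_or_lt with rfl | hab
    · exact diag a c
    rcases hbc.eq_or_lt with rfl | hbc
    · exact swap_left (swap_right (diag b a))
    exact lt a b c hab hbc
  rcases le_total i j with hij | hji <;> rcases le_total j k with hjk | hkj <;>
    rcases le_total i k with hik | hki
  · exact le hij hjk
  · exact le hij hjk
  · exact swap_right (le hik hkj)
  · exact swap_right (swap_left (le hki hij))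
  · exact swap_left (le hji hik)
  · exact swap_left (swap_right (le hjk hki))
  · exact swap_left (swap_right (swap_left (le hkj hji)))
  · exact swap_left (swap_right (swap_left (le hkj hji)))

theorem isMulCocycle_of_forall_lt {ι M : Type*} [LinearOrder ι] [Monoid M] {f : ι → ι → M}
    (hdiag : ∀ i, f i i = 1) (hrec : ∀ i j, f i j * f j i = 1)
    (hlt : ∀ i j k, i < j → j < k → f i j * f j k = f i k) : IsMulCocycle f := by
  refine forall_of_swap_of_forall_lt (fun i j k h => ?_) (fun i j k h => ?_) (fun i j => ?_) hlt
  · rw [← h, ← mul_assoc, hrec, one_mul]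
  · rw [← h, mul_assoc, hrec, mul_one]
  · rw [hdiag, one_mul]

theorem rank_eq_one_iff_isMulCocycle {ι R : Type*} [Fintype ι] [Nonempty ι] [CommRing R]
    [IsDomain R] {A : Matrix ι ι R} (hdiag : ∀ i, A i i = 1) :
    A.rank = 1 ↔ IsMulCocycle A := by
  refine ⟨fun h i j k => ?_, fun h => ?_⟩
  · rw [mul_apply_eq_of_rank_le_one h.le, hdiag, mul_one]
  · obtain ⟨a⟩ := ‹Nonempty ι›
    have eq_vecMulVec : A = Matrix.vecMulVec (fun i => A i a) (A a) :=
      Matrix.ext fun i k => (h i a k).symm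
    refine le_antisymm ?_ (one_le_rank_of_apply_ne_zero (i := a) (j := a) (by simp [hdiag]))
    rw [eq_vecMulVec]
    exact Matrix.rank_vecMulVec_le _ _

/-- The principal submatrix of `Q` on `S` has rank one. Such an `S` is automatically nonempty, so
`Maximal (IsRankOneOn Q)` generalizes `MaxRankOne Q` to any coefficient ring and index type. -/
def IsRankOneOn {ι R : Type*} [CommRing R] (Q : Matrix ι ι R) (S : Finset ι) : Prop :=
  (Q.submatrix ((↑) : S → ι) ((↑) : S → ι)).rank = 1

/-- The analogue of `pointCone` for an arbitrary coefficient ring and ordered index type; when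
`Q i j * Q j i = 1`, the order only selects one representative of each triple of indices. -/
def tripleCone {ι R : Type*} [LT ι] [CommRing R] (Q : Matrix ι ι R) : Set (ι → R) :=
  {u | u ≠ 0 ∧ ∀ i j k, i < j → j < k → (Q i j * Q j k - Q i k) * u i * u j * u k = 0}

/-- The analogue of `coordSubspace` for an arbitrary coefficient type and index type: the nonzero
vectors supported in `S`. -/
def coordCone {ι : Type*} (R : Type*) [Zero R] (S : Set ι) : Set (ι → R) :=
  {u | u ≠ 0 ∧ ∀ i, i ∉ S → u i = 0}

section CoordCone

variable {ι R : Type*}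

theorem mem_coordCone_iff_support_subset [Zero R] {S : Set ι} {u : ι → R} :
    u ∈ coordCone R S ↔ u ≠ 0 ∧ u.support ⊆ S :=
  and_congr_right' Function.support_subset_iff'.symm

theorem exists_subset_of_coordCone_subset_biUnion [Zero R] [One R] [NeZero (1 : R)]
    {S : Set ι} (hS : S.Nonempty) {κ : Type*} {I : Set κ} {T : κ → Set ι}
    (h : coordCone R S ⊆ ⋃ a ∈ I, coordCone R (T a)) : ∃ a ∈ I, S ⊆ T a := by
  have support_eq : (S.indicator (1 : ι → R)).support = S := by simp
  have indicator_ne_zero : S.indicator (1 : ι → R) ≠ 0 :=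
    Function.support_nonempty_iff.mp (support_eq.symm ▸ hS)
  have indicator_mem := h (mem_coordCone_iff_support_subset.mpr ⟨indicator_ne_zero, support_eq.le⟩)
  simp only [Set.mem_iUnion₂, mem_coordCone_iff_support_subset, support_eq] at indicator_mem
  obtain ⟨a, ha, -, hST⟩ := indicator_mem
  exact ⟨a, ha, hST⟩

end CoordCone

section IsRankOneOn

variable {ι R : Type*} [CommRing R] {Q : Matrix ι ι R} {S T : Finset ι}

theorem IsRankOneOn.nonempty [Nontrivial R] (h : IsRankOneOn Q S) : S.Nonempty :=
  Finset.card_pos.mp (Fintype.card_coe S ▸ h.symm.trans_le (Matrix.rank_le_card_width _))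

theorem not_coordCone_subset_biUnion_of_maximal [Nontrivial R]
    (hS : Maximal (IsRankOneOn Q) S) :
    ¬ coordCone R (S : Set ι) ⊆
      ⋃ T ∈ {T : Finset ι | Maximal (IsRankOneOn Q) T ∧ T ≠ S}, coordCone R (T : Set ι) := by
  intro h
  obtain ⟨T, ⟨hT, hne⟩, hST⟩ := exists_subset_of_coordCone_subset_biUnion hS.prop.nonempty h
  exact hne (hS.eq_of_le hT.prop hST).symm

variable [IsDomain R]

theorem isRankOneOn_iff_isMulCocycle (hdiag : ∀ i, Q i i = 1) (hS : S.Nonempty) :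
    IsRankOneOn Q S ↔ IsMulCocycle fun i j : S => Q i j :=
  have := hS.to_subtype
  rank_eq_one_iff_isMulCocycle fun i => hdiag i

theorem IsRankOneOn.subset (hdiag : ∀ i, Q i i = 1) (h : IsRankOneOn Q S) (hT : T.Nonempty)
    (hTS : T ⊆ S) : IsRankOneOn Q T :=
  (isRankOneOn_iff_isMulCocycle hdiag hT).mpr
    (((isRankOneOn_iff_isMulCocycle hdiag h.nonempty).mp h).comp (Set.inclusion hTS))

theorem forall_lt_iff_isMulCocycle_support [LinearOrder ι] (hdiag : ∀ i, Q i i = 1)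
    (hrec : ∀ i j, Q i j * Q j i = 1) {u : ι → R} (hS : (S : Set ι) = u.support) :
    (∀ i j k, i < j → j < k → (Q i j * Q j k - Q i k) * u i * u j * u k = 0) ↔
      IsMulCocycle fun i j : S => Q i j := by
  have mem_iff (i : ι) : i ∈ S ↔ u i ≠ 0 := by rw [← Finset.mem_coe, hS, Function.mem_support]
  constructor
  · refine fun h => isMulCocycle_of_forall_lt (fun i => hdiag i) (fun i j => hrec i j) ?_
    intro i j k hij hjk
    have triple := h i j k hij hjk
    simpa [(mem_iff _).mp i.2, (mem_iff _).mp j.2, (mem_iff _).mp k.2, sub_eq_zero] using triple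
  · intro h i j k _ _
    by_cases hmem : i ∈ S ∧ j ∈ S ∧ k ∈ S
    · obtain ⟨hi, hj, hk⟩ := hmem
      have cocycle : Q i j * Q j k = Q i k := h ⟨i, hi⟩ ⟨j, hj⟩ ⟨k, hk⟩
      simp [cocycle]
    · simp only [mem_iff] at hmem
      grind

theorem mem_tripleCone_iff_isRankOneOn_support [LinearOrder ι] (hdiag : ∀ i, Q i i = 1)
    (hrec : ∀ i j, Q i j * Q j i = 1) {u : ι → R} (hS : (S : Set ι) = u.support) :
    u ∈ tripleCone Q ↔ IsRankOneOn Q S := by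
  have nonempty_iff : S.Nonempty ↔ u ≠ 0 := by
    rw [← Finset.coe_nonempty, hS, Function.support_nonempty_iff]
  constructor
  · rintro ⟨hu, h⟩
    exact (isRankOneOn_iff_isMulCocycle hdiag (nonempty_iff.mpr hu)).mpr
      ((forall_lt_iff_isMulCocycle_support hdiag hrec hS).mp h)
  · intro h
    exact ⟨nonempty_iff.mp h.nonempty, (forall_lt_iff_isMulCocycle_support hdiag hrec hS).mpr
      ((isRankOneOn_iff_isMulCocycle hdiag h.nonempty).mp h)⟩

theorem tripleCone_eq_biUnion_coordCone [Finite ι] [LinearOrder ι] (hdiag : ∀ i, Q i i = 1)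
    (hrec : ∀ i j, Q i j * Q j i = 1) :
    tripleCone Q = ⋃ S ∈ {S : Finset ι | Maximal (IsRankOneOn Q) S}, coordCone R (S : Set ι) := by
  ext u
  obtain ⟨U, hU⟩ := u.support.toFinite.exists_finset_coe
  simp only [mem_tripleCone_iff_isRankOneOn_support hdiag hrec hU, Set.mem_iUnion₂,
    mem_coordCone_iff_support_subset, ← hU, Finset.coe_subset, Set.mem_ofPred_eq, exists_prop]
  constructor
  · intro h
    have hu : u ≠ 0 := ((mem_tripleCone_iff_isRankOneOn_support hdiag hrec hU).mpr h).1
    obtain ⟨S, hUS, hS⟩ := Finite.exists_le_maximal h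
    exact ⟨S, hS, hu, hUS⟩
  · rintro ⟨S, hS, hu, hUS⟩
    refine hS.prop.subset hdiag ?_ hUS
    rwa [← Finset.coe_nonempty, hU, Function.support_nonempty_iff]

end IsRankOneOn

theorem maxRankOne_iff_maximal_isRankOneOn {m : ℕ} {Q : Matrix (Fin m) (Fin m) ℂ}
    {S : Finset (Fin m)} : MaxRankOne Q S ↔ Maximal (IsRankOneOn Q) S := by
  constructor
  · rintro ⟨-, hrank, hmax⟩
    exact maximal_iff.mpr ⟨hrank, fun T hT => hmax T (IsRankOneOn.nonempty hT) hT⟩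
  · intro h
    exact ⟨h.prop.nonempty, h.prop, fun T _ hT hST => h.eq_of_le hT hST⟩

theorem stmt_4_general {ι R : Type*} [Finite ι] [LinearOrder ι] [CommRing R] [IsDomain R]
    (Q : Matrix ι ι R) (hdiag : ∀ i, Q i i = 1) (hrec : ∀ i j, Q i j * Q j i = 1) :
    (tripleCone Q = ⋃ S ∈ {S : Finset ι | Maximal (IsRankOneOn Q) S}, coordCone R (S : Set ι)) ∧
    ∀ S : Finset ι, Maximal (IsRankOneOn Q) S →
      ¬ (coordCone R (S : Set ι) ⊆
          ⋃ T ∈ {T : Finset ι | Maximal (IsRankOneOn Q) T ∧ T ≠ S}, coordCone R (T : Set ι)) :=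
  ⟨tripleCone_eq_biUnion_coordCone hdiag hrec, fun _ => not_coordCone_subset_biUnion_of_maximal⟩

theorem stmt_4 {m : ℕ} (Q : Matrix (Fin m) (Fin m) ℂ) (hQ : IsQuantumMatrix Q) :
    (pointCone Q = ⋃ S ∈ {S : Finset (Fin m) | MaxRankOne Q S},
        coordSubspace (↑S : Set (Fin m))) ∧
    ∀ S : Finset (Fin m), MaxRankOne Q S →
      ¬ (coordSubspace (↑S : Set (Fin m)) ⊆
          ⋃ T ∈ {T : Finset (Fin m) | MaxRankOne Q T ∧ T ≠ S},
            coordSubspace (↑T : Set (Fin m))) := by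
  simp only [maxRankOne_iff_maximal_isRankOneOn]
  exact stmt_4_general Q hQ.2.1 hQ.2.2
end

section
/- There are exactly 314 adequate collections of 3-element subsets of Fin 5. -/
/-- A collection `C` of 3-element subsets of `Fin m` is adequate if for every
`i : Fin m` and every `T ∈ C` there is a 2-element subset `S ⊆ T` with `i ∉ S`
and `S ∪ {i} ∈ C`. -/
def Adequate {m : ℕ} (C : Finset (Finset (Fin m))) : Prop :=
  ∀ i : Fin m, ∀ T ∈ C, ∃ S : Finset (Fin m),
    S ⊆ T ∧ S.card = 2 ∧ i ∉ S ∧ insert i S ∈ C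

/-!
The exchange condition at `(i, T)` with `i ∉ T` asks for a member of `C` other than `T` inside the
4-element set `T ∪ {i}`. Hence a collection of triples is adequate exactly when no 4-element set
contains exactly one of its members. On five points, passing to complements turns such collections
into the labelled graphs without a vertex of degree one, and it remains to run through the `2 ^ 10`
possibilities.
-/

open Finset

theorem mem_of_subset_insert_of_ne {α : Type*} [DecidableEq α] {T T' : Finset α} {i : α}
    (hcard : #T ≤ #T') (hsub : T' ⊆ insert i T) (hne : T' ≠ T) : i ∈ T' := by
  by_contra hi
  exact hne (eq_of_subset_of_card_le ((subset_insert_iff_of_notMem hi).1 hsub) hcard)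

section Triples

variable {m : ℕ} {C : Finset (Finset (Fin m))}

theorem adequate_iff_exists_mem_subset_insert (hC : (C : Set (Finset (Fin m))).Sized 3) :
    Adequate C ↔ ∀ i, ∀ T ∈ C, ∃ T' ∈ C, i ∈ T' ∧ T' ⊆ insert i T := by
  refine forall₃_congr fun i T _ ↦ ⟨?_, ?_⟩
  · rintro ⟨S, hST, -, -, hSC⟩
    exact ⟨insert i S, hSC, mem_insert_self i S, insert_subset_insert i hST⟩
  · rintro ⟨T', hT'C, hiT', hsub⟩
    refine ⟨T'.erase i, subset_insert_iff.1 hsub, ?_, notMem_erase i T', ?_⟩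
    · rw [card_erase_of_mem hiT', hC hT'C]
    · rwa [insert_erase hiT']

theorem adequate_iff_card_filter_subset_ne_one (hC : (C : Set (Finset (Fin m))).Sized 3) :
    Adequate C ↔ ∀ Q : Finset (Fin m), #Q = 4 → #{T ∈ C | T ⊆ Q} ≠ 1 := by
  rw [adequate_iff_exists_mem_subset_insert hC]
  constructor
  · intro hexch Q hQ hone
    obtain ⟨T, hT⟩ := card_eq_one.1 hone
    obtain ⟨hTC, hTQ⟩ : T ∈ C ∧ T ⊆ Q := mem_filter.1 (hT ▸ mem_singleton_self T)
    obtain ⟨i, hiQ, hiT⟩ : ∃ i ∈ Q, i ∉ T :=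
      exists_mem_notMem_of_card_lt_card (by rw [hC hTC, hQ]; norm_num)
    obtain ⟨T', hT'C, hiT', hsub⟩ := hexch i T hTC
    have hT'Q : T' ⊆ Q := hsub.trans (insert_subset hiQ hTQ)
    have hT'T : T' = T := mem_singleton.1 (hT ▸ mem_filter.2 ⟨hT'C, hT'Q⟩)
    exact hiT (hT'T ▸ hiT')
  · intro hne_one i T hTC
    by_cases hiT : i ∈ T
    · exact ⟨T, hTC, hiT, subset_insert i T⟩
    have hQ : #(insert i T) = 4 := by rw [card_insert_of_notMem hiT, hC hTC]
    have hT : T ∈ {T' ∈ C | T' ⊆ insert i T} := mem_filter.2 ⟨hTC, subset_insert i T⟩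
    have hone_lt : 1 < #{T' ∈ C | T' ⊆ insert i T} :=
      lt_of_le_of_ne (card_pos.2 ⟨T, hT⟩) (hne_one _ hQ).symm
    obtain ⟨T', hT', hT'T⟩ := exists_mem_ne hone_lt T
    obtain ⟨hT'C, hsub⟩ := mem_filter.1 hT'
    exact ⟨T', hT'C, mem_of_subset_insert_of_ne (by rw [hC hTC, hC hT'C]) hsub hT'T, hsub⟩

end Triples

theorem card_filter_forall_card_filter_subset_ne_one_fin_five :
    #{C ∈ (powersetCard 3 (univ : Finset (Fin 5))).powerset |
      ∀ Q ∈ powersetCard 4 univ, #{T ∈ C | T ⊆ Q} ≠ 1} = 314 := by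
  decide +kernel

theorem stmt_11 :
    Nat.card {C : Finset (Finset (Fin 5)) //
      (∀ T ∈ C, T.card = 3) ∧ Adequate C} = 314 := by
  rw [← card_filter_forall_card_filter_subset_ne_one_fin_five]
  refine Nat.subtype_card _ fun C ↦ ?_
  rw [mem_filter, mem_powerset, subset_powersetCard_univ_iff]
  refine and_congr_right fun hC ↦ ?_
  simp only [adequate_iff_card_filter_subset_ne_one hC, mem_powersetCard_univ]
end

section
/- Consider the natural action of the symmetric group on Fin 5 on collections of 3-element subsets of Fin 5 (a permutation σ sends a collection C to the collection of images σ(T) for T ∈ C; this action preserves adequacy). The number of orbits of this action on the set of adequate collections of 3-element subsets of Fin 5 is exactly 16. -/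
/-!
Replace each triple by its complementary pair, so that a collection of triples in `Fin 5` becomes a
graph on `Fin 5`. Adequacy then says exactly that no vertex has degree one: if `{i, j}` is an edge,
the condition at `i` asks for a second edge at `j`. The orbits are therefore the isomorphism classes
of leafless graphs on five vertices, and Burnside's lemma counts them: with one summand per cycle
type, `314 + 10 * 48 + 15 * 38 + 20 * 8 + 20 * 6 + 30 * 6 + 24 * 4 = 16 * 5!`.
-/

open Equiv Finset MulAction
open scoped Pointwise

section GroupAction

variable {G X : Type*} [Group G] [MulAction G X]

variable (X) in
theorem natCard_fixedBy_eq_of_isConj {g h : G} (hgh : IsConj g h) :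
    Nat.card (fixedBy X g) = Nat.card (fixedBy X h) := by
  obtain ⟨k, rfl⟩ := isConj_iff.1 hgh
  rw [← smul_fixedBy, Set.natCard_smul_set]

variable (G X) in
theorem sum_natCard_fixedBy_eq_natCard_orbits_mul_natCard_group [Fintype G] [Finite X] :
    ∑ g : G, Nat.card (fixedBy X g) = Nat.card (Quotient (orbitRel G X)) * Nat.card G := by
  classical
  have := Fintype.ofFinite X
  simpa only [Nat.card_eq_fintype_card] using sum_card_fixedBy_eq_card_orbits_mul_card_group G X

end GroupAction

section ClassFunction

theorem sum_filter_cycleType_eq {α M : Type*} [Fintype α] [DecidableEq α] [AddCommMonoid M]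
    {f : Perm α → M} (hf : ∀ σ τ, IsConj σ τ → f σ = f τ) (τ : Perm α) :
    ∑ σ : Perm α with σ.cycleType = τ.cycleType, f σ =
      #{σ : Perm α | σ.cycleType = τ.cycleType} • f τ :=
  sum_eq_card_nsmul fun σ hσ => hf σ τ (Perm.isConj_iff_cycleType_eq.2 (mem_filter.1 hσ).2)

theorem cycleType_mem_of_perm_fin_five (σ : Perm (Fin 5)) :
    σ.cycleType ∈ ({0, {2}, {2, 2}, {3}, {3, 2}, {4}, {5}} : Finset (Multiset ℕ)) := by
  -- The seven classes have `1 + 10 + 15 + 20 + 20 + 30 + 24 = 5!` elements in total.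
  have hcard : #{σ : Perm (Fin 5) | σ.cycleType ∈
      ({0, {2}, {2, 2}, {3}, {3, 2}, {4}, {5}} : Finset (Multiset ℕ))} =
      #(univ : Finset (Perm (Fin 5))) := by
    rw [← sum_card_fiberwise_eq_card_filter]
    simp_rw [Perm.card_of_cycleType, card_univ, Fintype.card_perm]
    decide
  exact card_filter_eq_iff.1 hcard σ (mem_univ σ)

theorem sum_perm_fin_five_eq {M : Type*} [AddCommMonoid M] {f : Perm (Fin 5) → M}
    (hf : ∀ σ τ, IsConj σ τ → f σ = f τ) :
    ∑ σ, f σ = f 1 + 10 • f c[0, 1] + 15 • f (c[0, 1] * c[2, 3]) + 20 • f c[0, 1, 2] +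
      20 • f (c[0, 1, 2] * c[3, 4]) + 30 • f c[0, 1, 2, 3] + 24 • f c[0, 1, 2, 3, 4] := by
  have sum_class (τ : Perm (Fin 5)) {m : Multiset ℕ} {k : ℕ} (hτ : τ.cycleType = m)
      (hk : #{σ : Perm (Fin 5) | σ.cycleType = m} = k) :
      ∑ σ : Perm (Fin 5) with σ.cycleType = m, f σ = k • f τ := by
    subst hτ hk
    exact sum_filter_cycleType_eq hf τ
  simp only [Perm.card_of_cycleType] at sum_class
  rw [← sum_fiberwise_of_maps_to fun σ _ => cycleType_mem_of_perm_fin_five σ]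
  repeat rw [sum_insert (by decide)]
  rw [sum_singleton,
    sum_class (m := 0) (k := 1) 1 (by decide +kernel) (by decide +kernel),
    sum_class (m := {2}) (k := 10) c[0, 1] (by decide +kernel) (by decide +kernel),
    sum_class (m := {2, 2}) (k := 15) (c[0, 1] * c[2, 3]) (by decide +kernel) (by decide +kernel),
    sum_class (m := {3}) (k := 20) c[0, 1, 2] (by decide +kernel) (by decide +kernel),
    sum_class (m := {3, 2}) (k := 20) (c[0, 1, 2] * c[3, 4]) (by decide +kernel)
      (by decide +kernel),
    sum_class (m := {4}) (k := 30) c[0, 1, 2, 3] (by decide +kernel) (by decide +kernel),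
    sum_class (m := {5}) (k := 24) c[0, 1, 2, 3, 4] (by decide +kernel) (by decide +kernel)]
  simp only [one_nsmul, add_assoc]

end ClassFunction

theorem Adequate.smul {m : ℕ} {C : Finset (Finset (Fin m))} (hC : Adequate C)
    (σ : Perm (Fin m)) : Adequate (σ • C) := by
  intro i T hT
  obtain ⟨S, hST, hS, hi, hiS⟩ := hC (σ⁻¹ • i) (σ⁻¹ • T) (inv_smul_mem_iff.2 hT)
  refine ⟨σ • S, by rwa [smul_finset_subset_iff], by rwa [card_smul_finset],
    by rwa [← inv_smul_mem_iff], ?_⟩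
  rw [← smul_inv_smul σ i, ← smul_finset_insert]
  exact smul_mem_smul_finset hiS

/-- The adequate collections of triples in `Fin m`, as a set stable under relabelling, so that it
carries an action of `Perm (Fin m)`. -/
def adequateCollections (m : ℕ) : SubMulAction (Perm (Fin m)) (Finset (Finset (Fin m))) where
  carrier := {C | (∀ T ∈ C, #T = 3) ∧ Adequate C}
  smul_mem' σ C hC := by
    refine ⟨fun T hT => ?_, hC.2.smul σ⟩
    rw [← card_smul_finset σ⁻¹ T]
    exact hC.1 _ (inv_smul_mem_iff.2 hT)

section Leafless

/-- The degree of the vertex `i` in the hypergraph whose edges are the complements of the members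
of `C`; for a collection of triples in `Fin 5` this is a graph. -/
def complDegree {α : Type*} [DecidableEq α] (C : Finset (Finset α)) (i : α) : ℕ :=
  #{T ∈ C | i ∉ T}

theorem exists_notMem_ne {α : Type*} [Fintype α] {T : Finset α}
    (hT : #T + 1 < Fintype.card α) (i : α) : ∃ j, j ∉ T ∧ j ≠ i := by
  classical
  simpa only [mem_compl] using exists_mem_ne (s := Tᶜ) (by rw [card_compl]; omega) i

theorem eq_compl_pair {α : Type*} [Fintype α] [DecidableEq α] {T : Finset α}
    (hT : Fintype.card α ≤ #T + 2) {i j : α} (hi : i ∉ T) (hj : j ∉ T) (hij : i ≠ j) :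
    T = {i, j}ᶜ := by
  refine eq_of_subset_of_card_le (fun x hx => ?_) ?_
  · rw [mem_compl, mem_insert, mem_singleton, not_or]
    exact ⟨ne_of_mem_of_not_mem hx hi, ne_of_mem_of_not_mem hx hj⟩
  · rw [card_compl, card_pair hij]
    omega

theorem adequate_of_forall_exists_erase_subset {m : ℕ} {C : Finset (Finset (Fin m))}
    (hcard : ∀ T ∈ C, #T = 3) (h : ∀ i, ∀ T ∈ C, ∃ U ∈ C, i ∈ U ∧ U.erase i ⊆ T) :
    Adequate C := by
  intro i T hT
  obtain ⟨U, hU, hiU, hUT⟩ := h i T hT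
  exact ⟨U.erase i, hUT, by rw [card_erase_of_mem hiU, hcard U hU], notMem_erase i U,
    by rwa [insert_erase hiU]⟩

variable {C : Finset (Finset (Fin 5))}

theorem Adequate.complDegree_ne_one (hcard : ∀ T ∈ C, #T = 3) (hC : Adequate C) (i : Fin 5) :
    complDegree C i ≠ 1 := by
  intro hdeg
  obtain ⟨T, hT⟩ := card_eq_one.1 hdeg
  have eq_of_notMem {U} (hU : U ∈ C) (hiU : i ∉ U) : U = T :=
    mem_singleton.1 (hT ▸ mem_filter.2 ⟨hU, hiU⟩)
  obtain ⟨hTC, hiT⟩ := mem_filter.1 (hT ▸ mem_singleton_self T)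
  obtain ⟨j, hjT, hji⟩ := exists_notMem_ne (by rw [hcard T hTC]; decide) i
  obtain ⟨S, hST, -, -, hSC⟩ := hC j T hTC
  have hiS : i ∉ insert j S := by
    rw [mem_insert, not_or]
    exact ⟨hji.symm, fun hi => hiT (hST hi)⟩
  exact hjT (eq_of_notMem hSC hiS ▸ mem_insert_self j S)

theorem adequate_of_complDegree_ne_one (hcard : ∀ T ∈ C, #T = 3)
    (hdeg : ∀ i, complDegree C i ≠ 1) : Adequate C := by
  refine adequate_of_forall_exists_erase_subset hcard fun i T hT => ?_
  by_cases hiT : i ∈ T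
  · exact ⟨T, hT, hiT, erase_subset i T⟩
  obtain ⟨j, hjT, hji⟩ := exists_notMem_ne (by rw [hcard T hT]; decide) i
  have eq_compl {U} (hU : U ∈ C) (hiU : i ∉ U) (hjU : j ∉ U) : U = {i, j}ᶜ :=
    eq_compl_pair (by rw [hcard U hU]; decide) hiU hjU hji.symm
  have hpos : 0 < complDegree C j := card_pos.2 ⟨T, mem_filter.2 ⟨hT, hjT⟩⟩
  have hlt : 1 < complDegree C j := lt_of_le_of_ne hpos (hdeg j).symm
  obtain ⟨U, hU, hUT⟩ := exists_mem_ne hlt T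
  obtain ⟨hUC, hjU⟩ := mem_filter.1 hU
  have hiU : i ∈ U := by
    by_contra hiU
    exact hUT ((eq_compl hUC hiU hjU).trans (eq_compl hT hiT hjT).symm)
  refine ⟨U, hUC, hiU, fun x hx => ?_⟩
  rw [eq_compl hT hiT hjT, mem_compl, mem_insert, mem_singleton, not_or]
  exact ⟨ne_of_mem_erase hx, ne_of_mem_of_not_mem (mem_of_mem_erase hx) hjU⟩

theorem adequate_iff_complDegree_ne_one (hcard : ∀ T ∈ C, #T = 3) :
    Adequate C ↔ ∀ i, complDegree C i ≠ 1 :=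
  ⟨fun hC => hC.complDegree_ne_one hcard, adequate_of_complDegree_ne_one hcard⟩

/-- The collections of triples in `Fin 5` whose complementary graph has no vertex of degree one:
an enumerable form of `adequateCollections 5`. -/
def leaflessCollections : Finset (Finset (Finset (Fin 5))) :=
  {C ∈ (univ.powersetCard 3).powerset | ∀ i, complDegree C i ≠ 1}

theorem mem_leaflessCollections : C ∈ leaflessCollections ↔ C ∈ adequateCollections 5 := by
  rw [leaflessCollections, mem_filter, mem_powerset]
  simp only [subset_iff, mem_powersetCard_univ]
  exact and_congr_right fun hcard => (adequate_iff_complDegree_ne_one hcard).symm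

/-- The number of leafless collections fixed by `σ`, in a form that can be evaluated. -/
def numFixedLeafless (σ : Perm (Fin 5)) : ℕ :=
  #{C ∈ leaflessCollections | ∀ T ∈ C, σ • T ∈ C}

theorem natCard_fixedBy_adequateCollections (σ : Perm (Fin 5)) :
    Nat.card (fixedBy (adequateCollections 5) σ) = numFixedLeafless σ := by
  rw [← Nat.card_image_of_injective Subtype.val_injective]
  refine Nat.subtype_card _ fun C => ?_
  rw [mem_filter, mem_leaflessCollections, ← mem_stabilizer_finset', mem_stabilizer_iff]
  constructor
  · rintro ⟨hC, hσ⟩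
    exact ⟨⟨C, hC⟩, Subtype.ext hσ, rfl⟩
  · rintro ⟨C, hσ, rfl⟩
    exact ⟨C.2, congrArg Subtype.val hσ⟩

-- A single conjunction, so that the kernel evaluates `leaflessCollections` only once.
theorem numFixedLeafless_eq :
    numFixedLeafless 1 = 314 ∧ numFixedLeafless c[0, 1] = 48 ∧
    numFixedLeafless (c[0, 1] * c[2, 3]) = 38 ∧ numFixedLeafless c[0, 1, 2] = 8 ∧
    numFixedLeafless (c[0, 1, 2] * c[3, 4]) = 6 ∧ numFixedLeafless c[0, 1, 2, 3] = 6 ∧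
    numFixedLeafless c[0, 1, 2, 3, 4] = 4 := by
  decide +kernel

end Leafless

theorem sum_natCard_fixedBy_adequateCollections :
    ∑ σ : Perm (Fin 5), Nat.card (fixedBy (adequateCollections 5) σ) = 16 * 120 := by
  obtain ⟨h₁, h₂, h₃, h₄, h₅, h₆, h₇⟩ := numFixedLeafless_eq
  rw [sum_perm_fin_five_eq fun σ τ => natCard_fixedBy_eq_of_isConj (adequateCollections 5)]
  simp only [natCard_fixedBy_adequateCollections, h₁, h₂, h₃, h₄, h₅, h₆, h₇, smul_eq_mul]

theorem natCard_orbits_adequateCollections :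
    Nat.card (Quotient (orbitRel (Perm (Fin 5)) (adequateCollections 5))) = 16 := by
  have hburnside := sum_natCard_fixedBy_eq_natCard_orbits_mul_natCard_group (Perm (Fin 5))
    (adequateCollections 5)
  have hgroup : Nat.card (Perm (Fin 5)) = 120 := by
    rw [Nat.card_perm, Nat.card_fin]
    rfl
  rw [sum_natCard_fixedBy_adequateCollections, hgroup] at hburnside
  omega

/-- Orbit equivalence: two adequate collections are related if some permutation
of `Fin 5` maps one to the other. -/
theorem stmt_12 :
    Nat.card (Quot (fun (C C' : {C : Finset (Finset (Fin 5)) //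
        (∀ T ∈ C, T.card = 3) ∧ Adequate C}) =>
      ∃ σ : Equiv.Perm (Fin 5),
        C.1.image (fun T => T.image σ) = C'.1)) = 16 := by
  rw [← natCard_orbits_adequateCollections]
  refine Nat.card_congr (Quot.congr (Equiv.refl _) fun C C' => ?_)
  have horbit (C C' : adequateCollections 5) :
      C' ∈ orbit (Perm (Fin 5)) C ↔ ∃ σ : Perm (Fin 5), σ • C.1 = C'.1 :=
    exists_congr fun σ => Subtype.ext_iff
  exact (horbit C C').symm.trans mem_orbit_symm
end

section
/- Let C be a nonempty adequate collection of 3-element subsets of Fin 6 that is not dense. Then there exists a permutation σ of Fin 6 such that the image of C under σ equals either 𝒜 = {{0,2,4},{0,2,5},{0,3,4},{0,3,5},{1,2,4},{1,2,5},{1,3,4},{1,3,5}} or ℬ = {{0,1,3},{0,1,5},{0,2,4},{0,4,5},{0,2,3},{1,2,4},{1,2,5},{1,3,4},{2,3,5},{3,4,5}}. -/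
/-- A collection `C` of 3-element subsets of `Fin m` is dense if there are
distinct `i, j` such that `{i,j,k} ∈ C` for at least `m - 3` elements
`k ∉ {i, j}`. -/
def DenseColl {m : ℕ} (C : Finset (Finset (Fin m))) : Prop :=
  ∃ i j : Fin m, i ≠ j ∧ m - 3 ≤
    (Finset.univ.filter
      (fun k : Fin m => k ≠ i ∧ k ≠ j ∧ ({i, j, k} : Finset (Fin m)) ∈ C)).card

/-!
If a collection on six points is not dense, every pair of points lies in at most two of its triples.
Adequacy assigns to each of the three points outside a triple `T` one of the three pairs in `T`,
and this assignment is injective, since a pair chosen twice would lie in three triples. So it is a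
bijection: the collection is a closed surface, and the three triples adjacent to `T` reach all the
points outside `T`. Label six points by `T = {0, 1, 3}` and its neighbours `{0, 2, 3}`, `{1, 3, 4}`,
`{0, 1, 5}`. Adequacy of `{0, 2, 3}` at `5` leaves two possibilities. If `{0, 2, 5}` is a triple,
the link of `0` is the 4-cycle `1 3 2 5` and the surface is the octahedron; if `{2, 3, 5}` is a
triple, the link of `0` is the 5-cycle `1 3 2 4 5` and the surface is the six-vertex projective
plane. In both cases each remaining triple is forced, because its competitors contain a pair which
already lies in two triples.
-/

open Finset

/-- The cofaces of `S` in `C`: the members of `C` containing `S`. For a pair `S` their number is the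
degree of that pair, which is what density is about. -/
def cofaces {α : Type*} [DecidableEq α] (C : Finset (Finset α)) (S : Finset α) :
    Finset (Finset α) :=
  {T ∈ C | S ⊆ T}

/-- `T` contains a pair which already lies in two members of `F`. If `F` is part of a collection in
which two is the maximal degree, such a `T` can be a member only if it belongs to `F`. -/
abbrev IsBlocked {α : Type*} [DecidableEq α] (F : Finset (Finset α)) (T : Finset α) : Prop :=
  ∃ S ∈ T.powersetCard 2, 2 ≤ #(cofaces F S)

/-- An adequate collection of triples in which every pair of points lies in at most two triples. On
six points these are the adequate collections which are not dense. -/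
structure IsThinAdequate {m : ℕ} (C : Finset (Finset (Fin m))) : Prop where
  card_eq_three : ∀ T ∈ C, #T = 3
  adequate : Adequate C
  card_cofaces_le_two : ∀ S, #S = 2 → #(cofaces C S) ≤ 2

/-- The triangle `{0, 1, 3}` and its three neighbours. The labels are those of `ℬ`. -/
abbrev trianglePatch : Finset (Finset (Fin 6)) :=
  {{0, 1, 3}, {0, 2, 3}, {1, 3, 4}, {0, 1, 5}}

section Cofaces

variable {α : Type*} [DecidableEq α] {C : Finset (Finset α)} {S T : Finset α}

theorem mem_cofaces : T ∈ cofaces C S ↔ T ∈ C ∧ S ⊆ T :=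
  mem_filter

theorem mem_image_image_perm (σ : Equiv.Perm α) :
    T ∈ C.image (fun U => U.image σ) ↔ T.image σ.symm ∈ C := by
  constructor
  · intro h
    obtain ⟨U, hU, rfl⟩ := mem_image.1 h
    simpa [image_image] using hU
  · exact fun h => mem_image.2 ⟨_, h, by simp [image_image]⟩

theorem cofaces_image_perm (σ : Equiv.Perm α) :
    cofaces (C.image (fun U => U.image σ)) S =
      (cofaces C (S.image σ.symm)).image (fun U => U.image σ) := by
  ext T
  simp only [mem_cofaces, mem_image_image_perm, image_subset_image_iff σ.symm.injective]

end Cofaces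

section Relabeling

variable {m : ℕ} {C : Finset (Finset (Fin m))}

theorem Adequate.image_perm (hC : Adequate C) (σ : Equiv.Perm (Fin m)) :
    Adequate (C.image (fun T => T.image σ)) := by
  intro i T hT
  obtain ⟨S, hST, hS, hi, hSC⟩ := hC (σ.symm i) _ ((mem_image_image_perm σ).1 hT)
  refine ⟨S.image σ, ?_, by rwa [card_image_of_injective _ σ.injective], ?_, ?_⟩
  · simpa [image_image] using image_subset_image (f := σ) hST
  · intro h
    obtain ⟨x, hx, rfl⟩ := mem_image.1 h
    exact hi (by simpa using hx)
  · rw [mem_image_image_perm]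
    simpa [image_insert, image_image] using hSC

theorem IsThinAdequate.image_perm (hC : IsThinAdequate C) (σ : Equiv.Perm (Fin m)) :
    IsThinAdequate (C.image (fun T => T.image σ)) where
  card_eq_three := forall_mem_image.2 fun T hT => by
    rw [card_image_of_injective _ σ.injective, hC.card_eq_three T hT]
  adequate := hC.adequate.image_perm σ
  card_cofaces_le_two S hS := by
    rw [cofaces_image_perm]
    exact card_image_le.trans <|
      hC.card_cofaces_le_two _ (by rwa [card_image_of_injective _ σ.symm.injective])

end Relabeling

theorem card_cofaces_lt_of_not_denseColl {m : ℕ} {C : Finset (Finset (Fin m))}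
    (h3 : ∀ T ∈ C, #T = 3) (hC : ¬ DenseColl C) {S : Finset (Fin m)} (hS : #S = 2) :
    #(cofaces C S) < m - 3 := by
  obtain ⟨i, j, hij, rfl⟩ := card_eq_two.1 hS
  refine lt_of_le_of_lt ?_ (not_le.1 fun h => hC ⟨i, j, hij, h⟩)
  refine (card_le_card fun T hT => ?_).trans (card_image_le (f := fun k => {i, j, k}))
  obtain ⟨hTC, hijT⟩ := mem_cofaces.1 hT
  obtain ⟨k, hk, rfl⟩ : ∃ k, k ∉ ({i, j} : Finset (Fin m)) ∧ insert k {i, j} = T :=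
    covBy_iff_exists_insert.1 <| covBy_iff_card_sdiff_eq_one.2
      ⟨hijT, by rw [card_sdiff_of_subset hijT, h3 T hTC, hS]⟩
  have insert_comm : ({i, j, k} : Finset (Fin m)) = {k, i, j} := by grind
  exact mem_image.2 ⟨k, by simpa [insert_comm, hTC] using hk, insert_comm⟩

namespace IsThinAdequate

section Forcing

variable {m : ℕ} {C F : Finset (Finset (Fin m))} {T : Finset (Fin m)}

theorem mem_of_isBlocked (hC : IsThinAdequate C) (hF : F ⊆ C) (hT : T ∈ C) (hFT : IsBlocked F T) :
    T ∈ F := by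
  obtain ⟨S, hS, two_le⟩ := hFT
  obtain ⟨hST, hS⟩ := mem_powersetCard.1 hS
  have cofaces_eq : cofaces F S = cofaces C S :=
    eq_of_subset_of_card_le (filter_subset_filter _ hF) ((hC.card_cofaces_le_two S hS).trans two_le)
  exact (mem_cofaces.1 (cofaces_eq ▸ mem_cofaces.2 ⟨hT, hST⟩)).1

theorem exists_insert_erase_mem (hC : IsThinAdequate C) (hT : T ∈ C) (i : Fin m) :
    ∃ t ∈ T, insert i (T.erase t) ∈ C := by
  obtain ⟨S, hST, hS, -, hSC⟩ := hC.adequate i T hT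
  obtain ⟨t, ht, rfl⟩ := covBy_iff_exists_erase.1 <| covBy_iff_card_sdiff_eq_one.2
    ⟨hST, by rw [card_sdiff_of_subset hST, hC.card_eq_three T hT, hS]⟩
  exact ⟨t, ht, hSC⟩

theorem insert_subset_of_forced (hC : IsThinAdequate C) (hF : F ⊆ C) (T U : Finset (Fin m))
    (i : Fin m) (hT : T ∈ F)
    (hU : ∀ t ∈ T, insert i (T.erase t) = U ∨
      IsBlocked F (insert i (T.erase t)) ∧ insert i (T.erase t) ∉ F) :
    insert U F ⊆ C := by
  obtain ⟨t, ht, htC⟩ := hC.exists_insert_erase_mem (hF hT) i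
  rcases hU t ht with rfl | ⟨hblocked, hnot_mem⟩
  · exact insert_subset htC hF
  · exact absurd (hC.mem_of_isBlocked hF htC hblocked) hnot_mem

theorem eq_of_forall_isBlocked (hC : IsThinAdequate C) (hF : F ⊆ C)
    (hblocked : ∀ T ∈ univ.powersetCard 3, IsBlocked F T) : C = F :=
  Subset.antisymm (fun T hT => hC.mem_of_isBlocked hF hT <|
    hblocked T (mem_powersetCard.2 ⟨subset_univ T, hC.card_eq_three T hT⟩)) hF

end Forcing

variable {C : Finset (Finset (Fin 6))} {T : Finset (Fin 6)}

theorem exists_bijOn_compl (hC : IsThinAdequate C) (hT : T ∈ C) :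
    ∃ f : Fin 6 → Fin 6, Set.BijOn f ↑Tᶜ ↑T ∧ ∀ i, insert i (T.erase (f i)) ∈ C := by
  choose f hf hfC using hC.exists_insert_erase_mem hT
  have inj : Set.InjOn f ↑Tᶜ := by
    intro i hi j hj hij
    by_contra hne
    rw [mem_coe, mem_compl] at hi hj
    have subset_cofaces : {T, insert i (T.erase (f i)), insert j (T.erase (f i))} ⊆
        cofaces C (T.erase (f i)) := by
      simp [insert_subset_iff, mem_cofaces, hT, hfC, erase_subset, hij, hij ▸ hfC i]
    have card_three : #{T, insert i (T.erase (f i)), insert j (T.erase (f i))} = 3 :=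
      Finset.card_eq_three.2 ⟨_, _, _, ne_insert_of_notMem _ _ hi, ne_insert_of_notMem _ _ hj,
        mt (insert_inj (notMem_mono (erase_subset _ _) hi)).1 hne, rfl⟩
    have card_erase : #(T.erase (f i)) = 2 := by
      rw [card_erase_of_mem (hf i), hC.card_eq_three T hT]
    have := (card_le_card subset_cofaces).trans (hC.card_cofaces_le_two _ card_erase)
    omega
  have maps : Set.MapsTo f ↑Tᶜ ↑T := fun i _ => hf i
  have card_le : #T ≤ #Tᶜ := by
    rw [card_compl, Fintype.card_fin, hC.card_eq_three T hT]
  exact ⟨f, ⟨maps, inj, surjOn_of_injOn_of_card_le f maps inj card_le⟩, hfC⟩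

theorem exists_perm_subset_image (hC : IsThinAdequate C) (hne : C.Nonempty) :
    ∃ σ : Equiv.Perm (Fin 6), trianglePatch ⊆ C.image (fun T => T.image σ) := by
  obtain ⟨T, hT⟩ := hne
  obtain ⟨f, hf, hfC⟩ := hC.exists_bijOn_compl hT
  obtain ⟨x₀, x₁, x₃, h₀₁, h₀₃, h₁₃, rfl⟩ := Finset.card_eq_three.1 (hC.card_eq_three T hT)
  have exists_opposite : ∀ x ∈ ({x₀, x₁, x₃} : Finset (Fin 6)), ∃ y ∉ ({x₀, x₁, x₃} : Finset _),
      f y = x := fun x hx => by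
    obtain ⟨y, hy, hyx⟩ := hf.surjOn (mem_coe.2 hx)
    exact ⟨y, mem_compl.1 (mem_coe.1 hy), hyx⟩
  obtain ⟨x₂, h₂, hf₂⟩ := exists_opposite x₁ (by simp)
  obtain ⟨x₄, h₄, hf₄⟩ := exists_opposite x₀ (by simp)
  obtain ⟨x₅, h₅, hf₅⟩ := exists_opposite x₃ (by simp)
  have inj : Function.Injective ![x₀, x₁, x₂, x₃, x₄, x₅] := by
    rw [← List.nodup_ofFn]
    simp only [List.ofFn_succ, List.ofFn_zero, List.nodup_cons, List.nodup_nil, List.mem_cons,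
      List.not_mem_nil, Matrix.cons_val_zero, Matrix.cons_val_succ]
    grind
  refine ⟨(Equiv.ofBijective _ (Finite.injective_iff_bijective.1 inj)).symm, ?_⟩
  have mem₂ : {x₀, x₂, x₃} ∈ C := by convert hfC x₂ using 1; grind
  have mem₄ : {x₁, x₃, x₄} ∈ C := by convert hfC x₄ using 1; grind
  have mem₅ : {x₀, x₁, x₅} ∈ C := by convert hfC x₅ using 1; grind
  simp only [insert_subset_iff, singleton_subset_iff, mem_image_image_perm]
  simpa [image_insert] using ⟨hT, mem₂, mem₄, mem₅⟩

theorem octahedral_or_projective (hC : IsThinAdequate C) (hF : trianglePatch ⊆ C) :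
    {0, 2, 5} ∈ C ∨ {2, 3, 5} ∈ C := by
  obtain ⟨t, ht, htC⟩ := hC.exists_insert_erase_mem (hF (by decide : {0, 2, 3} ∈ trianglePatch)) 5
  obtain rfl | rfl | rfl : t = 0 ∨ t = 2 ∨ t = 3 := by simpa using ht
  · exact .inr ((by decide : insert 5 (({0, 2, 3} : Finset (Fin 6)).erase 0) = {2, 3, 5}) ▸ htC)
  · exact absurd (hC.mem_of_isBlocked hF htC (by decide)) (by decide)
  · exact .inl ((by decide : insert 5 (({0, 2, 3} : Finset (Fin 6)).erase 3) = {0, 2, 5}) ▸ htC)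

theorem eq_octahedron (hC : IsThinAdequate C) (hF : insert {0, 2, 5} trianglePatch ⊆ C) :
    C = {{2, 4, 5}, {1, 4, 5}, {2, 3, 4}, {0, 2, 5}, {0, 1, 3}, {0, 2, 3}, {1, 3, 4},
      {0, 1, 5}} := by
  have h₂₃₄ := hC.insert_subset_of_forced hF {0, 2, 3} {2, 3, 4} 4 (by decide) (by decide)
  have h₁₄₅ := hC.insert_subset_of_forced h₂₃₄ {0, 1, 5} {1, 4, 5} 4 (by decide) (by decide)
  have h₂₄₅ := hC.insert_subset_of_forced h₁₄₅ {0, 2, 5} {2, 4, 5} 4 (by decide) (by decide)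
  exact hC.eq_of_forall_isBlocked h₂₄₅ (by decide)

theorem eq_projectivePlane (hC : IsThinAdequate C) (hF : insert {2, 3, 5} trianglePatch ⊆ C) :
    C = {{3, 4, 5}, {1, 2, 5}, {0, 4, 5}, {1, 2, 4}, {0, 2, 4}, {2, 3, 5}, {0, 1, 3}, {0, 2, 3},
      {1, 3, 4}, {0, 1, 5}} := by
  have h₀₂₄ := hC.insert_subset_of_forced hF {0, 2, 3} {0, 2, 4} 4 (by decide) (by decide)
  have h₁₂₄ := hC.insert_subset_of_forced h₀₂₄ {0, 2, 4} {1, 2, 4} 1 (by decide) (by decide)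
  have h₀₄₅ := hC.insert_subset_of_forced h₁₂₄ {0, 2, 4} {0, 4, 5} 5 (by decide) (by decide)
  have h₁₂₅ := hC.insert_subset_of_forced h₀₄₅ {0, 1, 5} {1, 2, 5} 2 (by decide) (by decide)
  have h₃₄₅ := hC.insert_subset_of_forced h₁₂₅ {0, 4, 5} {3, 4, 5} 3 (by decide) (by decide)
  exact hC.eq_of_forall_isBlocked h₃₄₅ (by decide)

end IsThinAdequate

theorem stmt_14 (C : Finset (Finset (Fin 6))) (h3 : ∀ T ∈ C, T.card = 3)
    (hne : C.Nonempty) (hC : Adequate C) (hnd : ¬ DenseColl C) :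
    ∃ σ : Equiv.Perm (Fin 6),
      C.image (fun T => T.image σ) =
        ({{0,2,4},{0,2,5},{0,3,4},{0,3,5},{1,2,4},{1,2,5},{1,3,4},{1,3,5}} :
          Finset (Finset (Fin 6))) ∨
      C.image (fun T => T.image σ) =
        ({{0,1,3},{0,1,5},{0,2,4},{0,4,5},{0,2,3},{1,2,4},{1,2,5},{1,3,4},
          {2,3,5},{3,4,5}} : Finset (Finset (Fin 6))) := by
  have hthin : IsThinAdequate C := ⟨h3, hC, fun S hS =>
    Nat.le_of_lt_succ (card_cofaces_lt_of_not_denseColl h3 hnd hS)⟩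
  obtain ⟨σ, hF⟩ := hthin.exists_perm_subset_image hne
  have hσ := hthin.image_perm σ
  rcases hσ.octahedral_or_projective hF with h | h
  · -- `τ` sends the antipodal pairs `{0, 4}`, `{3, 5}`, `{1, 2}` to `{0, 1}`, `{2, 3}`, `{4, 5}`.
    let τ : Equiv.Perm (Fin 6) := ⟨![0, 4, 5, 2, 1, 3], ![0, 4, 3, 5, 1, 2], by decide, by decide⟩
    refine ⟨σ.trans τ, .inl ?_⟩
    have himage : C.image (fun T => T.image (σ.trans τ)) =
        (C.image (fun T => T.image σ)).image (fun T => T.image τ) := by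
      simp [image_image, Function.comp_def]
    rw [himage, hσ.eq_octahedron (insert_subset h hF)]
    decide
  · refine ⟨σ, .inr ?_⟩
    rw [hσ.eq_projectivePlane (insert_subset h hF)]
    decide
end
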